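/- arXiv:2501.09731 — 3 statements merged into one kernel-verified Lean document; each statement's English description precedes it below -/
import Mathlib

section
/- In the modality-mismatch Gaussian linear model with θ ≠ 0, γ ≠ 0, and r > 0, with T_PPI++ and T_RePPI defined as in Proposition 1 (the PPI++ and recalibrated-PPI asymptotic variance traces), one has T_PPI++ − T_RePPI = (1/(1+r))·( 1/(γ^⊤Σ_Wγ) + 1/( ‖θ‖²/Tr(Σ_X^{-1}) + θ^⊤Σ_Xθ ) )^{-1} · Tr(Σ_X^{-1}), where ‖·‖ is the Euclidean norm. -/
open Matrix

/-- STATEMENT 12 (efficiency gain of RePPI over PPI++, Proposition 1, modality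
mismatch), stated with the closed forms of `T_PPI++` and `T_RePPI` established in
Proposition 1. -/
theorem modality_mismatch_gain
    {d m : ℕ}
    (Sx : Matrix (Fin d) (Fin d) ℝ) (hSx : Sx.PosDef)
    (Sw : Matrix (Fin m) (Fin m) ℝ) (hSw : Sw.PosDef)
    (σ : ℝ) (hσ : 0 < σ)
    (θ : Fin d → ℝ) (hθ : θ ≠ 0) (γ : Fin m → ℝ) (hγ : γ ≠ 0)
    (r : ℝ) (hr : 0 < r)
    (TPP TRe : ℝ)
    (hTPP : TPP = (σ ^ 2 + γ ⬝ᵥ Sw *ᵥ γ) * Sx⁻¹.trace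
        - (1 / (1 + r)) * (Sx⁻¹.trace * (γ ⬝ᵥ Sw *ᵥ γ)) ^ 2
          / ((∑ i, θ i ^ 2) + Sx⁻¹.trace * (θ ⬝ᵥ Sx *ᵥ θ + γ ⬝ᵥ Sw *ᵥ γ)))
    (hTRe : TRe = (σ ^ 2 + (r / (1 + r)) * (γ ⬝ᵥ Sw *ᵥ γ)) * Sx⁻¹.trace) :
    TPP - TRe
      = (1 / (1 + r)) * (1 / (γ ⬝ᵥ Sw *ᵥ γ) + 1 / ((∑ i, θ i ^ 2) / Sx⁻¹.trace + θ ⬝ᵥ Sx *ᵥ θ))⁻¹ * Sx⁻¹.trace := by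
  have hg : 0 < γ ⬝ᵥ Sw *ᵥ γ := by
    simpa using hSw.dotProduct_mulVec_pos hγ
  have hq : 0 < θ ⬝ᵥ Sx *ᵥ θ := by
    simpa using hSx.dotProduct_mulVec_pos hθ
  have hne : Nonempty (Fin d) := by
    by_contra h
    rw [not_nonempty_iff] at h
    exact hθ (Subsingleton.elim _ _)
  have ht : 0 < Sx⁻¹.trace := hSx.inv.trace_pos
  have hn : 0 ≤ ∑ i, θ i ^ 2 := Finset.sum_nonneg fun i _ => sq_nonneg _
  rw [hTPP, hTRe]
  generalize γ ⬝ᵥ Sw *ᵥ γ = g at *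
  generalize θ ⬝ᵥ Sx *ᵥ θ = q at *
  generalize Sx⁻¹.trace = t at *
  generalize ∑ i, θ i ^ 2 = n at *
  have h1 : n + t * (q + g) ≠ 0 := by positivity
  have h2 : n + t * q ≠ 0 := by positivity
  have h3 : 1 + r ≠ 0 := by positivity
  have hs : (1 / g + 1 / (n / t + q))⁻¹ = g * (n + t * q) / (n + t * (q + g)) := by
    have e : n / t + q = (n + t * q) / t := by field_simp
    rw [e, one_div_div, div_add_div _ _ hg.ne' h2, inv_div]
    congr 1
    ring
  rw [hs]
  field_simp
  ring
end

section
/- In the three-component Gaussian mixture model, for every r > 0 the following hold, writing S := (μ₁ − μ₂)² + (μ₂ − μ₃)² + (μ₃ − μ₁)²: (i) Var(Y) = σ² + S/9; (ii) Var(Y − Z) + r·Var(Z) = Var(Y) + 2(1+r)/3 − 2(μ₃ − μ₁)/3; (iii) Var(Y) − (1/(1+r))·Cov(Y, Z)²/Var(Z) = Var(Y) − (1/(1+r))·(μ₃ − μ₁)²/6; and (iv) Var(Y) − (1/(1+r))·Var(E[Y | σ(Z)]) = Var(Y) − (1/(1+r))·S/9, where Var denotes variance, Cov(Y, Z) :=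 E[(Y − E Y)(Z − E Z)], and E[Y | σ(Z)] is the conditional expectation of Y given the σ-algebra generated by Z. -/
open MeasureTheory ProbabilityTheory Matrix


lemma gmv_integral {Ω : Type*} [MeasurableSpace Ω] (P : Measure Ω) [IsProbabilityMeasure P]
    (Z : Ω → Fin 3) (hZm : Measurable Z) (hZ : ∀ k : Fin 3, P {ω | Z ω = k} = 1 / 3)
    (f : Fin 3 → ℝ) : ∫ ω, f (Z ω) ∂P = (f 0 + f 1 + f 2) / 3 := by
  have : IsProbabilityMeasure (P.map Z) := Measure.isProbabilityMeasure_map hZm.aemeasurable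
  rw [← integral_map (f := f) hZm.aemeasurable (by fun_prop), integral_fintype .of_finite]
  have h : ∀ k, (P.map Z).real {k} = 1 / 3 := by
    intro k
    rw [Measure.real, Measure.map_apply hZm (measurableSet_singleton k)]
    have : Z ⁻¹' {k} = {ω | Z ω = k} := rfl
    rw [this, hZ]
    simp
  simp only [h, Fin.sum_univ_three, smul_eq_mul]
  ring

lemma gmv_memLp {Ω : Type*} [MeasurableSpace Ω] (P : Measure Ω) [IsProbabilityMeasure P]
    (Z : Ω → Fin 3) (hZm : Measurable Z) (f : Fin 3 → ℝ) : MemLp (fun ω => f (Z ω)) 2 P := by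
  have : IsProbabilityMeasure (P.map Z) := Measure.isProbabilityMeasure_map hZm.aemeasurable
  have h : MemLp f 2 (P.map Z) := MemLp.of_discrete
  exact h.comp_of_map hZm.aemeasurable

lemma gmv_variance {Ω : Type*} [MeasurableSpace Ω] (P : Measure Ω) [IsProbabilityMeasure P]
    (Z : Ω → Fin 3) (hZm : Measurable Z) (hZ : ∀ k : Fin 3, P {ω | Z ω = k} = 1 / 3)
    (f : Fin 3 → ℝ) : variance (fun ω => f (Z ω)) P
      = (f 0 ^ 2 + f 1 ^ 2 + f 2 ^ 2) / 3 - ((f 0 + f 1 + f 2) / 3) ^ 2 := by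
  rw [variance_eq_sub (gmv_memLp P Z hZm f), gmv_integral P Z hZm hZ f]
  congr 1
  exact gmv_integral P Z hZm hZ (fun k => f k ^ 2)

lemma gmv_covariance {Ω : Type*} [MeasurableSpace Ω] (P : Measure Ω) [IsProbabilityMeasure P]
    (Z : Ω → Fin 3) (hZm : Measurable Z) (hZ : ∀ k : Fin 3, P {ω | Z ω = k} = 1 / 3)
    (f g : Fin 3 → ℝ) : covariance (fun ω => f (Z ω)) (fun ω => g (Z ω)) P
      = (f 0 * g 0 + f 1 * g 1 + f 2 * g 2) / 3
        - ((f 0 + f 1 + f 2) / 3) * ((g 0 + g 1 + g 2) / 3) := by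
  rw [covariance_eq_sub (gmv_memLp P Z hZm f) (gmv_memLp P Z hZm g), gmv_integral P Z hZm hZ f,
    gmv_integral P Z hZm hZ g]
  congr 1
  exact gmv_integral P Z hZm hZ (fun k => f k * g k)

/-- Proposition 3, discrete predictions: the four asymptotic variance
formulas (XY-only, PPI, PPI++, recalibrated PPI) in the three-component Gaussian
mixture model, writing `S = (μ₁−μ₂)² + (μ₂−μ₃)² + (μ₃−μ₁)²`. -/
theorem gaussian_mixture_variances
    {Ω : Type*} [MeasurableSpace Ω] (P : Measure Ω) [IsProbabilityMeasure P]
    (μ1 μ2 μ3 : ℝ) (σ : ℝ) (hσ : 0 < σ)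
    (Z : Ω → Fin 3) (ξ : Ω → ℝ)
    (hZm : Measurable Z) (hξm : Measurable ξ)
    (hZ : ∀ k : Fin 3, P {ω | Z ω = k} = 1 / 3)
    (hξ : P.map ξ = gaussianReal 0 1)
    (hInd : IndepFun Z ξ P)
    (Y Zr : Ω → ℝ)
    (hY : Y = fun ω => ![μ1, μ2, μ3] (Z ω) + σ * ξ ω)
    (hZr : Zr = fun ω => ((Z ω).val : ℝ) + 1)
    (S : ℝ) (hS : S = (μ1 - μ2) ^ 2 + (μ2 - μ3) ^ 2 + (μ3 - μ1) ^ 2)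
    (r : ℝ) (hr : 0 < r) :
    variance Y P = σ ^ 2 + S / 9
    ∧ variance (fun ω => Y ω - Zr ω) P + r * variance Zr P
        = variance Y P + 2 * (1 + r) / 3 - 2 * (μ3 - μ1) / 3
    ∧ variance Y P - (1 / (1 + r)) * (∫ ω, (Y ω - ∫ ω', Y ω' ∂P) * (Zr ω - ∫ ω', Zr ω' ∂P) ∂P) ^ 2 / variance Zr P
        = variance Y P - (1 / (1 + r)) * (μ3 - μ1) ^ 2 / 6
    ∧ variance Y P - (1 / (1 + r)) * variance (P[Y | MeasurableSpace.comap Z inferInstance]) P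
        = variance Y P - (1 / (1 + r)) * S / 9 := by
  have hξL : MemLp ξ 2 P := by
    have h : MemLp id 2 (P.map ξ) := by rw [hξ]; exact memLp_id_gaussianReal 2
    exact h.comp_of_map hξm.aemeasurable
  have hξmean : ∫ ω, ξ ω ∂P = 0 := by
    have h := integral_map (μ := P) (f := fun x : ℝ => x) hξm.aemeasurable (by fun_prop)
    rw [← h, hξ, integral_id_gaussianReal]
  have hξvar : variance ξ P = 1 := by
    have h := variance_map (X := id) (μ := P) (Y := ξ) (by fun_prop) hξm.aemeasurable
    rw [hξ, variance_id_gaussianReal] at h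
    simpa using h.symm
  have hσL : MemLp (fun ω => σ * ξ ω) 2 P := hξL.const_mul σ
  have hcov : ∀ f : Fin 3 → ℝ, covariance (fun ω => f (Z ω)) (fun ω => σ * ξ ω) P = 0 := by
    intro f
    rw [covariance_const_mul_right]
    have h : IndepFun (fun ω => f (Z ω)) ξ P :=
      hInd.comp (φ := f) (ψ := id) (by fun_prop) measurable_id
    rw [h.covariance_eq_zero (gmv_memLp P Z hZm f) hξL, mul_zero]
  have hvar : ∀ f : Fin 3 → ℝ, variance (fun ω => f (Z ω) + σ * ξ ω) P
      = (f 0 ^ 2 + f 1 ^ 2 + f 2 ^ 2) / 3 - ((f 0 + f 1 + f 2) / 3) ^ 2 + σ ^ 2 := by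
    intro f
    rw [variance_fun_add (gmv_memLp P Z hZm f) hσL, hcov, variance_const_mul, hξvar,
      gmv_variance P Z hZm hZ]
    ring
  set m : Fin 3 → ℝ := ![μ1, μ2, μ3] with hm
  have m0 : m 0 = μ1 := rfl
  have m1 : m 1 = μ2 := rfl
  have m2 : m 2 = μ3 := rfl
  have hvY : variance Y P = σ ^ 2 + S / 9 := by
    rw [hY, hvar, m0, m1, m2, hS]; ring
  have hvZ : variance Zr P = 2 / 3 := by
    rw [hZr, gmv_variance P Z hZm hZ (fun k => (k.val : ℝ) + 1)]
    norm_num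
  have hvD : variance (fun ω => Y ω - Zr ω) P = variance Y P + 2 / 3 - 2 * (μ3 - μ1) / 3 := by
    have : (fun ω => Y ω - Zr ω)
        = fun ω => (fun k : Fin 3 => m k - ((k.val : ℝ) + 1)) (Z ω) + σ * ξ ω := by
      funext ω; simp only [hY, hZr]; ring
    rw [this, hvar (fun k : Fin 3 => m k - ((k.val : ℝ) + 1)), hvY, hS]
    simp only [m0, m1, m2]
    norm_num
    ring
  have hc : (∫ ω, (Y ω - ∫ ω', Y ω' ∂P) * (Zr ω - ∫ ω', Zr ω' ∂P) ∂P) = (μ3 - μ1) / 3 := by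
    change covariance Y Zr P = _
    have h1 := gmv_memLp P Z hZm m
    have h2 := gmv_memLp P Z hZm (fun k => (k.val : ℝ) + 1)
    have h3 : covariance Y Zr P = covariance (fun ω => m (Z ω)) Zr P
        + covariance (fun ω => σ * ξ ω) Zr P := by
      rw [hY, hZr]
      exact covariance_add_left h1 hσL h2
    rw [h3, hZr, gmv_covariance P Z hZm hZ m (fun k => (k.val : ℝ) + 1), covariance_comm,
      hcov (fun k => (k.val : ℝ) + 1)]
    simp only [m0, m1, m2]
    norm_num
    ring
  have hce : P[Y | MeasurableSpace.comap Z inferInstance] =ᵐ[P] fun ω => m (Z ω) := by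
    have hle : MeasurableSpace.comap Z inferInstance ≤ (inferInstance : MeasurableSpace Ω) :=
      hZm.comap_le
    have hi1 : Integrable (fun ω => m (Z ω)) P := (gmv_memLp P Z hZm m).integrable one_le_two
    have hi2 : Integrable (fun ω => σ * ξ ω) P := hσL.integrable one_le_two
    have e1 := condExp_add hi1 hi2 (MeasurableSpace.comap Z inferInstance)
    have e2 : P[fun ω => m (Z ω) | MeasurableSpace.comap Z inferInstance] = fun ω => m (Z ω) := by
      refine condExp_of_stronglyMeasurable hle ?_ hi1
      exact ((measurable_of_finite m).comp (comap_measurable Z)).stronglyMeasurable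
    have e3 : P[fun ω => σ * ξ ω | MeasurableSpace.comap Z inferInstance]
        =ᵐ[P] fun _ => ∫ ω, σ * ξ ω ∂P := by
      refine condExp_indep_eq (m₁ := MeasurableSpace.comap ξ inferInstance) hξm.comap_le hle ?_ ?_
      · exact ((comap_measurable ξ).const_mul σ).stronglyMeasurable
      · exact hInd.symm
    have hY' : Y = (fun ω => m (Z ω)) + fun ω => σ * ξ ω := hY
    rw [hY']
    filter_upwards [e1, e3] with ω h1 h3
    rw [h1, Pi.add_apply, e2, h3, integral_const_mul, hξmean]
    simp
  have hvC : variance (P[Y | MeasurableSpace.comap Z inferInstance]) P = S / 9 := by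
    rw [variance_congr hce, gmv_variance P Z hZm hZ, m0, m1, m2, hS]; ring
  refine ⟨hvY, ?_, ?_, ?_⟩
  · rw [hvD, hvZ]; ring
  · rw [hc, hvZ]; ring
  · rw [hvC]; ring
end

section
/- In the three-component Gaussian mixture model, for every r > 0, [Var(Y) − (1/(1+r))·Cov(Y, Z)²/Var(Z)] − [Var(Y) − (1/(1+r))·Var(E[Y | σ(Z)])] = (2μ₂ − μ₃ − μ₁)² / (18·(1+r)), and in particular this difference is nonnegative; here Var denotes variance, Cov(Y, Z) := E[(Y − E Y)(Z − E Z)], and E[Y | σ(Z)] is the conditional expectation of Y given the σ-algebra generated by Z. -/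
open MeasureTheory ProbabilityTheory Matrix

/-- Expectation of a function of the uniform label. -/
lemma gmg_integral_label {Ω : Type*} [MeasurableSpace Ω] (P : Measure Ω) [IsProbabilityMeasure P]
    (Z : Ω → Fin 3) (hZm : Measurable Z)
    (hZ : ∀ k : Fin 3, P {ω | Z ω = k} = 1 / 3) (g : Fin 3 → ℝ) :
    ∫ ω, g (Z ω) ∂P = (g 0 + g 1 + g 2) / 3 := by
  have : IsProbabilityMeasure (P.map Z) := Measure.isProbabilityMeasure_map hZm.aemeasurable
  have h1 : ∫ ω, g (Z ω) ∂P = ∫ k, g k ∂(P.map Z) :=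
    (integral_map hZm.aemeasurable (measurable_of_finite g).aestronglyMeasurable).symm
  have h2 : ∀ k : Fin 3, (P.map Z).real {k} = 1 / 3 := by
    intro k
    rw [measureReal_def, Measure.map_apply hZm (measurableSet_singleton k)]
    have : Z ⁻¹' {k} = {ω | Z ω = k} := rfl
    rw [this, hZ k]
    simp
  rw [h1, integral_fintype Integrable.of_finite, Fin.sum_univ_three, h2, h2, h2]
  simp only [smul_eq_mul]
  ring

/-- Proposition 3, discrete predictions: the efficiency gap between
PPI++ and recalibrated PPI equals `(2μ₂ − μ₃ − μ₁)²/(18(1+r)) ≥ 0`. -/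
theorem gaussian_mixture_gap
    {Ω : Type*} [MeasurableSpace Ω] (P : Measure Ω) [IsProbabilityMeasure P]
    (μ1 μ2 μ3 : ℝ) (σ : ℝ) (hσ : 0 < σ)
    (Z : Ω → Fin 3) (ξ : Ω → ℝ)
    (hZm : Measurable Z) (hξm : Measurable ξ)
    (hZ : ∀ k : Fin 3, P {ω | Z ω = k} = 1 / 3)
    (hξ : P.map ξ = gaussianReal 0 1)
    (hInd : IndepFun Z ξ P)
    (Y Zr : Ω → ℝ)
    (hY : Y = fun ω => ![μ1, μ2, μ3] (Z ω) + σ * ξ ω)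
    (hZr : Zr = fun ω => ((Z ω).val : ℝ) + 1)
    (r : ℝ) (hr : 0 < r) :
    (variance Y P - (1 / (1 + r)) * (∫ ω, (Y ω - ∫ ω', Y ω' ∂P) * (Zr ω - ∫ ω', Zr ω' ∂P) ∂P) ^ 2 / variance Zr P)
        - (variance Y P - (1 / (1 + r)) * variance (P[Y | MeasurableSpace.comap Z inferInstance]) P)
      = (2 * μ2 - μ3 - μ1) ^ 2 / (18 * (1 + r))
    ∧ 0 ≤ (variance Y P - (1 / (1 + r)) * (∫ ω, (Y ω - ∫ ω', Y ω' ∂P) * (Zr ω - ∫ ω', Zr ω' ∂P) ∂P) ^ 2 / variance Zr P)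
        - (variance Y P - (1 / (1 + r)) * variance (P[Y | MeasurableSpace.comap Z inferInstance]) P) := by
  have hL := gmg_integral_label P Z hZm hZ
  have hgI : ∀ g : Fin 3 → ℝ, Integrable (fun ω => g (Z ω)) P := fun g =>
    Integrable.comp_measurable (Integrable.of_finite (f := g)) hZm
  have hξ0 : ∫ ω, ξ ω ∂P = 0 := by
    have h : ∫ x, x ∂(P.map ξ) = ∫ ω, ξ ω ∂P :=
      integral_map hξm.aemeasurable measurable_id.aestronglyMeasurable
    rw [← h, hξ, integral_id_gaussianReal]
  have hξI : Integrable ξ P := by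
    have h : Integrable (id : ℝ → ℝ) (P.map ξ) := by
      rw [hξ]
      exact (memLp_id_gaussianReal 1).integrable le_rfl
    exact h.comp_measurable hξm
  have hprodI : ∀ g : Fin 3 → ℝ, Integrable (fun ω => g (Z ω) * ξ ω) P := fun g =>
    (hInd.comp (measurable_of_finite g) measurable_id).integrable_mul (hgI g) hξI
  have hprod : ∀ g : Fin 3 → ℝ, ∫ ω, g (Z ω) * ξ ω ∂P = 0 := fun g => by
    have h := (hInd.comp (measurable_of_finite g) measurable_id).integral_fun_mul_eq_mul_integral
      (hgI g).aestronglyMeasurable hξI.aestronglyMeasurable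
    have h' : ∫ ω, g (Z ω) * ξ ω ∂P = (∫ ω, g (Z ω) ∂P) * ∫ ω, ξ ω ∂P := h
    rw [h', hξ0, mul_zero]
  set m : Fin 3 → ℝ := ![μ1, μ2, μ3] with hm
  have hvar : ∀ g : Fin 3 → ℝ, variance (fun ω => g (Z ω)) P
      = ((g 0 - (g 0 + g 1 + g 2) / 3) ^ 2 + (g 1 - (g 0 + g 1 + g 2) / 3) ^ 2
        + (g 2 - (g 0 + g 1 + g 2) / 3) ^ 2) / 3 := fun g => by
    rw [variance_eq_integral (hgI g).aemeasurable, hL g]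
    exact hL (fun k => (g k - (g 0 + g 1 + g 2) / 3) ^ 2)
  have hEY : ∫ ω, Y ω ∂P = (μ1 + μ2 + μ3) / 3 := by
    rw [hY, integral_add (hgI m) (hξI.const_mul σ), hL m, integral_const_mul, hξ0]
    simp [hm]
  have hEZ : ∫ ω, Zr ω ∂P = 2 := by
    rw [hZr, hL (fun k => (k.val : ℝ) + 1)]
    norm_num
  have hVZ : variance Zr P = 2 / 3 := by
    rw [hZr, hvar (fun k => (k.val : ℝ) + 1)]
    norm_num
  have hcov : ∫ ω, (Y ω - ∫ ω', Y ω' ∂P) * (Zr ω - ∫ ω', Zr ω' ∂P) ∂P = (μ3 - μ1) / 3 := by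
    rw [hEY, hEZ]
    have e : (fun ω => (Y ω - (μ1 + μ2 + μ3) / 3) * (Zr ω - 2)) = fun ω =>
        (fun k : Fin 3 => (m k - (μ1 + μ2 + μ3) / 3) * ((k.val : ℝ) + 1 - 2)) (Z ω)
        + (fun k : Fin 3 => σ * ((k.val : ℝ) + 1 - 2)) (Z ω) * ξ ω := by
      funext ω
      rw [hY, hZr]
      ring
    have hadd : ∀ g h : Fin 3 → ℝ,
        ∫ ω, (g (Z ω) + h (Z ω) * ξ ω) ∂P = (g 0 + g 1 + g 2) / 3 := fun g h => by
      rw [integral_add (hgI g) (hprodI h), hL, hprod, add_zero]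
    rw [e]
    refine (hadd (fun k : Fin 3 => (m k - (μ1 + μ2 + μ3) / 3) * ((k.val : ℝ) + 1 - 2))
      (fun k : Fin 3 => σ * ((k.val : ℝ) + 1 - 2))).trans ?_
    simp [hm]
    ring
  have hle : MeasurableSpace.comap Z inferInstance ≤ (inferInstance : MeasurableSpace Ω) :=
    hZm.comap_le
  have hce : P[Y | MeasurableSpace.comap Z inferInstance] =ᵐ[P] fun ω => m (Z ω) := by
    have h1 : P[fun ω => m (Z ω) | MeasurableSpace.comap Z inferInstance] = fun ω => m (Z ω) :=
      condExp_of_stronglyMeasurable hle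
        ((measurable_of_finite m).comp (comap_measurable Z)).stronglyMeasurable (hgI m)
    have h2 : P[fun ω => σ * ξ ω | MeasurableSpace.comap Z inferInstance]
        =ᵐ[P] fun _ => ∫ ω, σ * ξ ω ∂P := by
      refine condExp_indep_eq hξm.comap_le hle
        ((comap_measurable ξ).const_mul σ).stronglyMeasurable ?_
      exact (IndepFun_iff_Indep _ _ _).1 hInd.symm
    have h3 := condExp_add (hgI m) (hξI.const_mul σ) (MeasurableSpace.comap Z inferInstance)
    have hY' : Y = (fun ω => m (Z ω)) + fun ω => σ * ξ ω := hY
    rw [hY']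
    filter_upwards [h2, h3] with ω e2 e3
    rw [e3, Pi.add_apply, e2, h1, integral_const_mul, hξ0]
    simp
  have hVC : variance (P[Y | MeasurableSpace.comap Z inferInstance]) P
      = (2 * μ2 - μ3 - μ1) ^ 2 / 18 + (μ3 - μ1) ^ 2 / 6 := by
    rw [variance_congr hce, hvar m]
    simp [hm]
    ring
  have hr' : (1 + r) ≠ 0 := by positivity
  have key : (variance Y P - (1 / (1 + r)) * (∫ ω, (Y ω - ∫ ω', Y ω' ∂P) * (Zr ω - ∫ ω', Zr ω' ∂P) ∂P) ^ 2 / variance Zr P)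
        - (variance Y P - (1 / (1 + r)) * variance (P[Y | MeasurableSpace.comap Z inferInstance]) P)
      = (2 * μ2 - μ3 - μ1) ^ 2 / (18 * (1 + r)) := by
    rw [hcov, hVZ, hVC]
    field_simp
    ring
  refine ⟨key, ?_⟩
  rw [key]
  positivity
end
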